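/- Let n ≥ r be positive integers. Suppose B ∈ ℂ^{n×r} factors as B = L·Σ·Rᴴ, where L ∈ ℂ^{n×r} is semi-unitary, R ∈ ℂ^{r×r} is unitary, and Σ ∈ ℂ^{r×r} is a diagonal matrix whose diagonal entries are nonnegative real numbers. Then U* := L·Rᴴ is semi-unitary, Re trace((U*)ᴴB) = trace(Σ), and for every semi-unitary matrix U ∈ ℂ^{n×r}, Re trace(UᴴB) ≤ trace(Σ); that is, U* = L·Rᴴ is a global maximizer of U ↦ Re trace(UᴴB) over the set of semi-unitary n×r matrices. -/

import Mathlib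

open Matrix

/-!
By cyclicity of the trace, `tr (Uᴴ L Σ Rᴴ) = tr ((U R)ᴴ L Σ)`, where `U R` is again semi-unitary.
For `Σ` positive semidefinite, `(L - U R) Σ (L - U R)ᴴ` has nonnegative trace; expanding it gives
`2 Re tr ((U R)ᴴ L Σ) ≤ 2 tr Σ`.
-/

open scoped ComplexOrder

section

variable {m n k : Type*} [Fintype m] [Fintype n]

lemma conjTranspose_mul_self_mul_eq_one {α : Type*} [Semiring α] [StarRing α]
    [DecidableEq n] [DecidableEq k] {V : Matrix m n α} {W : Matrix n k α}
    (hV : Vᴴ * V = 1) (hW : Wᴴ * W = 1) : (V * W)ᴴ * (V * W) = 1 := by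
  rw [conjTranspose_mul, Matrix.mul_assoc, ← Matrix.mul_assoc Vᴴ, hV, Matrix.one_mul, hW]

lemma star_trace_conjTranspose_mul_mul {α : Type*} [CommSemiring α] [StarRing α]
    {P : Matrix n n α} (hP : P.IsHermitian) (V W : Matrix m n α) :
    star (trace (Vᴴ * W * P)) = trace (Wᴴ * V * P) := by
  rw [← trace_conjTranspose, conjTranspose_mul, conjTranspose_mul, conjTranspose_conjTranspose,
    hP.eq, trace_mul_comm]

variable {𝕜 : Type*} [RCLike 𝕜]

lemma two_mul_re_trace_conjTranspose_mul_mul_le {P : Matrix n n 𝕜} (hP : P.PosSemidef)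
    (V W : Matrix m n 𝕜) :
    2 * RCLike.re (trace (Vᴴ * W * P)) ≤
      RCLike.re (trace (Vᴴ * V * P)) + RCLike.re (trace (Wᴴ * W * P)) := by
  have hnonneg : 0 ≤ RCLike.re (trace ((W - V)ᴴ * (W - V) * P)) := by
    rw [← trace_mul_cycle]
    exact (RCLike.nonneg_iff.mp (hP.mul_mul_conjTranspose_same (W - V)).trace_nonneg).1
  have hcross : RCLike.re (trace (Wᴴ * V * P)) = RCLike.re (trace (Vᴴ * W * P)) := by
    rw [← star_trace_conjTranspose_mul_mul hP.isHermitian V W, RCLike.star_def, RCLike.conj_re]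
  simp only [conjTranspose_sub, Matrix.sub_mul, Matrix.mul_sub, trace_sub, map_sub] at hnonneg
  linarith

lemma re_trace_conjTranspose_mul_mul_le_re_trace [DecidableEq n] {P : Matrix n n 𝕜}
    (hP : P.PosSemidef) {V W : Matrix m n 𝕜} (hV : Vᴴ * V = 1) (hW : Wᴴ * W = 1) :
    RCLike.re (trace (Vᴴ * W * P)) ≤ RCLike.re (trace P) := by
  have h := two_mul_re_trace_conjTranspose_mul_mul_le hP V W
  rw [hV, hW, Matrix.one_mul] at h
  linarith

theorem svd_solves_semiunitary_trace_maximization_general [Fintype k] [DecidableEq n]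
    [DecidableEq k] {B : Matrix m n 𝕜} {L : Matrix m k 𝕜} {S : Matrix k k 𝕜} {R : Matrix n k 𝕜}
    (hL : Lᴴ * L = 1) (hR : Rᴴ * R = 1 ∧ R * Rᴴ = 1) (hS : S.PosSemidef) (hB : B = L * S * Rᴴ) :
    (L * Rᴴ)ᴴ * (L * Rᴴ) = 1 ∧
    RCLike.re (trace ((L * Rᴴ)ᴴ * B)) = RCLike.re (trace S) ∧
    ∀ U : Matrix m n 𝕜, Uᴴ * U = 1 → RCLike.re (trace (Uᴴ * B)) ≤ RCLike.re (trace S) := by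
  have htrace (U : Matrix m n 𝕜) : trace (Uᴴ * B) = trace ((U * R)ᴴ * L * S) := by
    rw [hB, ← Matrix.mul_assoc, trace_mul_comm, conjTranspose_mul]
    simp only [Matrix.mul_assoc]
  refine ⟨conjTranspose_mul_self_mul_eq_one hL ?_, ?_, fun U hU => ?_⟩
  · rw [conjTranspose_conjTranspose, hR.2]
  · rw [htrace, Matrix.mul_assoc L, hR.1, Matrix.mul_one, hL, Matrix.one_mul]
  · rw [htrace]
    exact re_trace_conjTranspose_mul_mul_le_re_trace hS
      (conjTranspose_mul_self_mul_eq_one hU hR.1) hL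

end

lemma posSemidef_of_isDiag_of_nonneg {k α : Type*} [Ring α] [PartialOrder α] [StarRing α]
    [StarOrderedRing α] {S : Matrix k k α} (hS : S.IsDiag) (hnonneg : ∀ i, 0 ≤ S i i) :
    S.PosSemidef := by
  classical
  rw [← hS.diagonal_diag]
  exact PosSemidef.diagonal hnonneg

/-- If `B = L·Σ·Rᴴ` is a thin SVD (`L` semi-unitary `n×r`, `R` unitary `r×r`,
`Σ` diagonal with nonnegative real diagonal), then `U* = L·Rᴴ` is semi-unitary,
`Re trace((U*)ᴴB) = trace Σ`, and `U*` maximizes `U ↦ Re trace(UᴴB)` over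
semi-unitary matrices. -/
theorem svd_solves_semiunitary_trace_maximization
    (n r : ℕ) (hr : 0 < r) (hrn : r ≤ n)
    (B L : Matrix (Fin n) (Fin r) ℂ) (S R : Matrix (Fin r) (Fin r) ℂ)
    (hL : Lᴴ * L = 1) (hR : Rᴴ * R = 1 ∧ R * Rᴴ = 1)
    (hS : S.IsDiag) (hSdiag : ∀ i : Fin r, (S i i).im = 0 ∧ 0 ≤ (S i i).re)
    (hB : B = L * S * Rᴴ) :
    (L * Rᴴ)ᴴ * (L * Rᴴ) = 1 ∧
    (Matrix.trace ((L * Rᴴ)ᴴ * B)).re = (Matrix.trace S).re ∧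
    (∀ U : Matrix (Fin n) (Fin r) ℂ, Uᴴ * U = 1 →
      (Matrix.trace (Uᴴ * B)).re ≤ (Matrix.trace S).re) := by
  have hpos : S.PosSemidef := posSemidef_of_isDiag_of_nonneg hS fun i =>
    Complex.nonneg_iff.mpr ⟨(hSdiag i).2, (hSdiag i).1.symm⟩
  exact svd_solves_semiunitary_trace_maximization_general hL hR hpos hB
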